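/- arXiv:1007.1771 — 2 statements merged into one kernel-verified Lean document; each statement's English description precedes it below -/
import Mathlib

section
/- With probability at least 1 − 2M^{1−q}, every Group Lasso solution β̂ satisfies, simultaneously for all β ∈ ℝ^K: (1/N)‖X(β̂ − β*)‖² + Σ_{j=1}^M λ_j‖β̂^j − β^j‖ ≤ (1/N)‖X(β − β*)‖² + 4 Σ_{j∈J(β)} λ_j · min(‖β^j‖, ‖β̂^j − β^j‖). -/
/-!
The inequality follows from a deterministic argument on an event where the noise is small.

If `‖X_{G_j}ᵀ W‖ ≤ N λ_j / 2` for every `j`, comparing the objective at a minimizer `b` and at an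
arbitrary `β` and applying Cauchy–Schwarz within each group gives
`(1/N)‖X(b - β*)‖² ≤ (1/N)‖X(β - β*)‖² + Σ_j λ_j‖b^j - β^j‖ + 2 Σ_j λ_j (‖β^j‖ - ‖b^j‖)`.
After `Σ_j λ_j‖b^j - β^j‖` is added to both sides, the triangle inequality bounds the penalty terms
group by group: they vanish when `β^j = 0` and are at most `4 λ_j min(‖β^j‖, ‖b^j - β^j‖)`
otherwise (`oracle_of_noise_bound`).

The event fails for group `j` with probability at most `M^{-q}`. In an eigenbasis of
`X_{G_j} X_{G_j}ᵀ` (`exists_diagonalization`), rotation invariance of the Gaussian law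
(`pi_gaussian_eq_map`) turns `‖X_{G_j}ᵀ W‖²` into `σ² Σ_l m_l ξ_l²` with `ξ_l` i.i.d. standard
normal, where `0 ≤ m_l ≤ N⦀Ψ_j⦀` and `Σ_l m_l = N tr Ψ_j ≤ K_j N⦀Ψ_j⦀`. A Chernoff bound for
weighted chi-square sums (`weighted_chisq_tail`) with `t = q log M` matches the assumed lower bound
on `λ_j`, and a union bound over the `M` groups concludes.
-/

open MeasureTheory ProbabilityTheory Finset

noncomputable section

namespace GroupLasso

/-- The index set `{1,…,K}` partitioned into `M` groups, the `j`-th of size `Kj j`. -/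
abbrev GIdx {M : ℕ} (Kj : Fin M → ℕ) : Type := (j : Fin M) × Fin (Kj j)

/-- Euclidean norm `‖β^j‖` of the `j`-th group of coefficients. -/
def gnorm {M : ℕ} {Kj : Fin M → ℕ} (β : GIdx Kj → ℝ) (j : Fin M) : ℝ :=
  Real.sqrt (∑ t, (β ⟨j, t⟩) ^ 2)

/-- Trace of `Ψ_j = X_{G_j}ᵀ X_{G_j} / N`. -/
def trPsi {N M : ℕ} {Kj : Fin M → ℕ} (X : Matrix (Fin N) (GIdx Kj) ℝ) (j : Fin M) : ℝ :=
  (∑ t, ∑ i, (X i ⟨j, t⟩) ^ 2) / N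

/-- Spectral norm of the positive semidefinite matrix `Ψ_j = X_{G_j}ᵀ X_{G_j} / N`,
expressed as the supremum of its quadratic form over unit vectors supported on group `j`. -/
def specPsi {N M : ℕ} {Kj : Fin M → ℕ} (X : Matrix (Fin N) (GIdx Kj) ℝ) (j : Fin M) : ℝ :=
  sSup {x | ∃ v : GIdx Kj → ℝ, (∀ k : GIdx Kj, k.1 ≠ j → v k = 0) ∧ (∑ k, (v k) ^ 2 = 1) ∧
    x = (∑ i, (∑ k, X i k * v k) ^ 2) / N}

/-- The Group Lasso objective `(1/N)‖Xβ − y‖² + 2 Σ_j λ_j ‖β^j‖`. -/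
def glObj {N M : ℕ} {Kj : Fin M → ℕ} (X : Matrix (Fin N) (GIdx Kj) ℝ) (y : Fin N → ℝ)
    (lam : Fin M → ℝ) (β : GIdx Kj → ℝ) : ℝ :=
  (∑ i, (X.mulVec β i - y i) ^ 2) / N + 2 * ∑ j, lam j * gnorm β j

/-- `b` is a Group Lasso solution. -/
def IsGLSol {N M : ℕ} {Kj : Fin M → ℕ} (X : Matrix (Fin N) (GIdx Kj) ℝ) (y : Fin N → ℝ)
    (lam : Fin M → ℝ) (b : GIdx Kj → ℝ) : Prop :=
  ∀ β : GIdx Kj → ℝ, glObj X y lam b ≤ glObj X y lam β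


/-! ### Tails of weighted chi-square sums -/

/-- The moment generating function of `ξ²`, `ξ` standard normal, is at most that of a sub-gamma
variable; this is `z ≤ sinh z` in disguise. -/
lemma inv_sqrt_le_exp {a u : ℝ} (ha : 0 ≤ a) (hau : a ≤ u) (hu : u < 1 / 2) :
    (Real.sqrt (1 - 2 * a))⁻¹ ≤ Real.exp (a + a * u / (1 - 2 * u)) := by
  have hy : 0 < 1 - 2 * a := by linarith
  have hlog : 0 ≤ -Real.log (1 - 2 * a) := by
    have := Real.log_nonpos hy.le (by linarith); linarith
  -- `z ≤ sinh z` at `z = -log (1 - 2a)`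
  have h1 := Real.self_le_sinh_iff.2 hlog
  rw [Real.sinh_neg, Real.sinh_log hy] at h1
  have h2 : (Real.sqrt (1 - 2 * a))⁻¹ = Real.exp (-Real.log (1 - 2 * a) / 2) := by
    rw [← Real.exp_log (inv_pos.2 (Real.sqrt_pos.2 hy)), Real.log_inv, Real.log_sqrt hy.le]
    ring_nf
  rw [h2]
  apply Real.exp_le_exp.2
  have h3 : a * a / (1 - 2 * a) ≤ a * u / (1 - 2 * u) := by
    apply div_le_div₀ (mul_nonneg ha (ha.trans hau)) (by gcongr) (by linarith) (by linarith)
  have h4 : a + a * a / (1 - 2 * a) = -((1 - 2 * a) - (1 - 2 * a)⁻¹) / 2 / 2 := by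
    have key : ∀ y : ℝ, y ≠ 0 →
        (1 - y) / 2 + (1 - y) / 2 * ((1 - y) / 2) / y = -(y - y⁻¹) / 2 / 2 := by
      intro y hy0
      field_simp
      ring
    have := key _ hy.ne'
    rwa [show (1 - (1 - 2 * a)) / 2 = a by ring] at this
  linarith

lemma integrable_exp_sq {c : ℝ} (hc : c < 1 / 2) :
    Integrable (fun x => Real.exp (c * x ^ 2)) (gaussianReal 0 1) := by
  rw [gaussianReal_of_var_ne_zero _ one_ne_zero,
    integrable_withDensity_iff_integrable_smul' (measurable_gaussianPDF _ _)
      (ae_of_all _ fun _ ↦ gaussianPDF_lt_top)]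
  have := (integrable_exp_neg_mul_sq (b := 1 / 2 - c) (by linarith)).const_mul
    (Real.sqrt (2 * Real.pi))⁻¹
  refine this.congr (ae_of_all _ fun x => ?_)
  simp only [toReal_gaussianPDF, gaussianPDFReal, smul_eq_mul, NNReal.coe_one, mul_one, sub_zero]
  rw [mul_assoc, ← Real.exp_add]
  congr 2; ring

lemma integral_exp_sq {c : ℝ} (hc : c < 1 / 2) :
    ∫ x, Real.exp (c * x ^ 2) ∂(gaussianReal 0 1) = (Real.sqrt (1 - 2 * c))⁻¹ := by
  rw [integral_gaussianReal_eq_integral_smul one_ne_zero]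
  have : ∀ x : ℝ, gaussianPDFReal 0 1 x • Real.exp (c * x ^ 2) =
      (Real.sqrt (2 * Real.pi))⁻¹ * Real.exp (-(1 / 2 - c) * x ^ 2) := by
    intro x
    simp only [gaussianPDFReal, smul_eq_mul, NNReal.coe_one, mul_one, sub_zero]
    rw [mul_assoc, ← Real.exp_add]
    congr 2; ring
  simp_rw [this]
  rw [integral_const_mul, integral_gaussian, ← Real.sqrt_inv, ← Real.sqrt_inv,
    ← Real.sqrt_mul (by positivity)]
  congr 1
  have := Real.pi_pos
  have h : 1 / 2 - c ≠ 0 := by linarith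
  have h' : 1 - 2 * c ≠ 0 := by linarith
  field_simp

/-- Upper tail of `Σ m_i ξ_i²` for independent standard normal `ξ_i`: the sum exceeds its mean by
`2L(2t + √(κt))` with probability at most `e^{-t}`, where `L` bounds the weights and `κL` their
sum. -/
lemma weighted_chisq_tail {ι : Type*} [Fintype ι] (m : ι → ℝ) (L κ t : ℝ) (hm : ∀ i, 0 ≤ m i)
    (hmL : ∀ i, m i ≤ L) (hκ : 0 < κ) (hsum : ∑ i, m i ≤ κ * L) (ht : 0 ≤ t) :
    (Measure.pi fun _ : ι => gaussianReal 0 1).real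
      {x | ∑ i, m i + 2 * L * (2 * t + Real.sqrt (κ * t)) < ∑ i, m i * x i ^ 2} ≤
      Real.exp (-t) := by
  -- for `L = 0` the exponential parameter below is undefined, but the event is empty
  rcases le_or_gt L 0 with hL | hL
  · have hm0 : ∀ i, m i = 0 := fun i => le_antisymm ((hmL i).trans hL) (hm i)
    have : 0 ≤ κ * L := (sum_nonneg fun i _ => hm i).trans hsum
    have hL0 : L = 0 := le_antisymm hL (nonneg_of_mul_nonneg_right this hκ)
    simp [hm0, hL0, Real.exp_nonneg]
  obtain ⟨a, ha, rfl⟩ : ∃ a : ℝ, 0 < a ∧ a ^ 2 = κ :=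
    ⟨Real.sqrt κ, Real.sqrt_pos.2 hκ, Real.sq_sqrt hκ.le⟩
  obtain ⟨r, hr, rfl⟩ : ∃ r : ℝ, 0 ≤ r ∧ r ^ 2 = t :=
    ⟨Real.sqrt t, Real.sqrt_nonneg t, Real.sq_sqrt ht⟩
  rw [← mul_pow, Real.sqrt_sq (by positivity)]
  -- the Laurent–Massart choice of the exponential parameter, in units of `1 / L`
  set u := r / (a + 2 * r) with hu
  have hu0 : 0 ≤ u := by positivity
  have hu1 : 1 - 2 * u = a / (a + 2 * r) := by rw [hu]; field_simp; ring
  have hu2 : 0 < 1 - 2 * u := by rw [hu1]; positivity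
  set s := u / L with hs
  have hs0 : 0 ≤ s := by positivity
  have hsL : s * L = u := by rw [hs]; field_simp
  have hsm : ∀ i, s * m i ≤ u := fun i => by rw [← hsL]; exact mul_le_mul_of_nonneg_left (hmL i) hs0
  have hexp : ∀ x : ι → ℝ, Real.exp (s * ∑ i, m i * x i ^ 2) =
      ∏ i, Real.exp ((s * m i) * x i ^ 2) := fun x => by
    rw [← Real.exp_sum, mul_sum]; simp_rw [mul_assoc]
  have hint : Integrable (fun x : ι → ℝ => Real.exp (s * ∑ i, m i * x i ^ 2))
      (Measure.pi fun _ : ι => gaussianReal 0 1) := by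
    simp_rw [hexp]
    exact Integrable.fintype_prod (f := fun i (y : ℝ) => Real.exp ((s * m i) * y ^ 2))
      fun i => integrable_exp_sq (by linarith [hsm i])
  have hmgf : mgf (fun x : ι → ℝ => ∑ i, m i * x i ^ 2)
      (Measure.pi fun _ : ι => gaussianReal 0 1) s ≤
      Real.exp (s * ∑ i, m i + a ^ 2 * u ^ 2 / (1 - 2 * u)) := by
    unfold mgf
    simp_rw [hexp]
    rw [integral_fintype_prod_eq_prod (f := fun i (y : ℝ) => Real.exp ((s * m i) * y ^ 2))]
    calc _ ≤ ∏ i, Real.exp (s * m i + s * m i * u / (1 - 2 * u)) := by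
          refine prod_le_prod (fun i _ => integral_nonneg fun y => (Real.exp_pos _).le) fun i _ => ?_
          rw [integral_exp_sq (by linarith [hsm i])]
          exact inv_sqrt_le_exp (mul_nonneg hs0 (hm i)) (hsm i) (by linarith)
      _ = Real.exp (s * ∑ i, m i + (s * ∑ i, m i) * u / (1 - 2 * u)) := by
          rw [← Real.exp_sum, sum_add_distrib, ← sum_div, ← sum_mul, ← mul_sum]
      _ ≤ _ := by
          apply Real.exp_le_exp.2
          have h1 : (s * ∑ i, m i) * u ≤ a ^ 2 * u ^ 2 := by
            have h2 : s * ∑ i, m i ≤ a ^ 2 * u :=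
              (mul_le_mul_of_nonneg_left hsum hs0).trans_eq (by rw [← hsL]; ring)
            exact (mul_le_mul_of_nonneg_right h2 hu0).trans_eq (by ring)
          gcongr
  calc (Measure.pi fun _ : ι => gaussianReal 0 1).real
        {x | ∑ i, m i + 2 * L * (2 * r ^ 2 + a * r) < ∑ i, m i * x i ^ 2}
      ≤ (Measure.pi fun _ : ι => gaussianReal 0 1).real
        {x | ∑ i, m i + 2 * L * (2 * r ^ 2 + a * r) ≤ ∑ i, m i * x i ^ 2} :=
        measureReal_mono (Set.ofPred_subset_ofPred.2 fun x hx => le_of_lt hx)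
    _ ≤ _ := measure_ge_le_exp_mul_mgf _ hs0 hint
    _ ≤ _ := mul_le_mul_of_nonneg_left hmgf (Real.exp_pos _).le
    _ ≤ Real.exp (-r ^ 2) := by
      rw [← Real.exp_add]
      apply Real.exp_le_exp.2
      have h1 : a ^ 2 * u ^ 2 / (1 - 2 * u) = r ^ 2 * (a / (a + 2 * r)) := by
        rw [hu1, hu]; field_simp
      have h2 : a / (a + 2 * r) ≤ 1 := by rw [div_le_one (by positivity)]; linarith
      have h3 : s * (2 * L * (2 * r ^ 2 + a * r)) = 2 * r ^ 2 := by
        rw [show s * (2 * L * (2 * r ^ 2 + a * r)) = s * L * (2 * (2 * r ^ 2 + a * r)) by ring,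
          hsL, hu]
        field_simp
        ring
      have h4 : r ^ 2 * (a / (a + 2 * r)) ≤ r ^ 2 * 1 := by gcongr
      rw [h1]
      linarith

/-! ### Gaussian quadratic forms -/

/-- Orthonormal eigenbasis `b` of `C Cᵀ` with eigenvalues `m`. The vector `c = Cᵀ b_l` in the last
clause satisfies `‖c‖² = m_l` and `‖C c‖² = m_l²`, so any bound on the quadratic form of `Cᵀ C`
transfers to `m_l`. -/
lemma exists_diagonalization {N : ℕ} {κ : Type*} [Fintype κ] (C : Matrix (Fin N) κ ℝ) :
    ∃ (b : OrthonormalBasis (Fin N) ℝ (EuclideanSpace ℝ (Fin N))) (m : Fin N → ℝ),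
      (∀ x : Fin N → ℝ, ∑ k, (∑ i, C i k * (∑ l, x l • b l) i) ^ 2 = ∑ l, m l * x l ^ 2) ∧
      ∑ l, m l = ∑ k, ∑ i, C i k ^ 2 ∧
      ∀ l, ∃ c : κ → ℝ, ∑ k, c k ^ 2 = m l ∧ ∑ i, (∑ k, C i k * c k) ^ 2 = m l ^ 2 := by
  have hS : (C * C.transpose).IsHermitian := by
    simpa using Matrix.isHermitian_mul_conjTranspose_self C
  set b := hS.eigenvectorBasis with hb
  set m := hS.eigenvalues with hm
  have hev : ∀ l, C.mulVec (C.transpose.mulVec (b l)) = m l • (b l : Fin N → ℝ) := fun l => by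
    rw [Matrix.mulVec_mulVec]; exact hS.mulVec_eigenvectorBasis l
  have hbb : ∀ l l', (b l : Fin N → ℝ) ⬝ᵥ (b l' : Fin N → ℝ) = if l = l' then 1 else 0 := by
    intro l l'
    have := orthonormal_iff_ite.1 b.orthonormal l l'
    rw [← this, PiLp.inner_apply]
    simp [dotProduct, mul_comm]
  have hcc : ∀ l l', C.transpose.mulVec (b l) ⬝ᵥ C.transpose.mulVec (b l') =
      if l = l' then m l else 0 := by
    intro l l'
    rw [Matrix.mulVec_transpose C (b l), ← Matrix.dotProduct_mulVec, hev,
      dotProduct_smul, hbb]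
    split_ifs with h <;> simp [h]
  refine ⟨b, m, fun x => ?_, ?_, fun l => ⟨C.transpose.mulVec (b l), ?_, ?_⟩⟩
  · have h1 : ∀ k, ∑ i, C i k * (∑ l, x l • b l) i =
        (∑ l, x l • C.transpose.mulVec (b l)) k := by
      intro k
      simp only [WithLp.ofLp_sum, WithLp.ofLp_smul, Finset.sum_apply, Pi.smul_apply, smul_eq_mul,
        Matrix.mulVec, dotProduct, Matrix.transpose_apply, mul_sum]
      rw [sum_comm]
      exact sum_congr rfl fun _ _ => sum_congr rfl fun _ _ => by ring
    simp_rw [h1]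
    have h2 : ∀ v : κ → ℝ, ∑ k, v k ^ 2 = v ⬝ᵥ v := fun v => by simp [dotProduct, sq]
    rw [h2, sum_dotProduct]
    simp_rw [dotProduct_sum, smul_dotProduct, dotProduct_smul, hcc]
    simp
    exact sum_congr rfl fun _ _ => by ring
  · have := hS.trace_eq_sum_eigenvalues
    simp only [RCLike.ofReal_real_eq_id, id] at this
    rw [hm, ← this, sum_comm]
    simp [Matrix.trace, Matrix.mul_apply, sq]
  · have := hcc l l
    simpa [dotProduct, sq] using this
  · have h3 : ∀ i, ∑ k, C i k * C.transpose.mulVec (b l) k = m l * b l i := fun i => by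
      have := congrFun (hev l) i
      simpa [Matrix.mulVec, dotProduct] using this
    simp_rw [h3, mul_pow]
    rw [← mul_sum]
    have := hbb l l
    simp only [dotProduct, if_true, ← sq] at this
    rw [this, mul_one]

/-- Rotation invariance: i.i.d. `N(0, σ²)` coordinates arise as `σ` times a vector with i.i.d.
standard normal coefficients in any orthonormal basis. -/
lemma pi_gaussian_eq_map {N : ℕ} (σ : ℝ)
    (b : OrthonormalBasis (Fin N) ℝ (EuclideanSpace ℝ (Fin N))) :
    (Measure.pi fun _ : Fin N => gaussianReal 0 (σ ^ 2).toNNReal) =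
      (Measure.pi fun _ : Fin N => gaussianReal 0 1).map
        (fun x i => σ * (∑ l, x l • b l) i) := by
  have h1 := (stdGaussian_eq_map_pi_orthonormalBasis b).symm.trans
    (map_pi_eq_stdGaussian (ι := Fin N)).symm
  have h2 : (Measure.pi fun _ : Fin N => gaussianReal 0 1).map (fun x i => σ * x i) =
      Measure.pi fun _ : Fin N => gaussianReal 0 (σ ^ 2).toNNReal := by
    have h0 : (gaussianReal 0 1).map (fun x => σ * x) = gaussianReal 0 (σ ^ 2).toNNReal := by
      rw [gaussianReal_map_const_mul]
      congr 1
      · simp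
      · rw [mul_one]; ext; simp [sq_nonneg]
    have : SigmaFinite ((gaussianReal 0 1).map (fun x => σ * x)) := by rw [h0]; infer_instance
    rw [Measure.pi_map_pi (f := fun _ x => σ * x) (fun _ => by fun_prop), h0]
  have h3 := congrArg (Measure.map (fun (v : EuclideanSpace ℝ (Fin N)) (i : Fin N) => σ * v i)) h1
  rw [Measure.map_map (by fun_prop) (by fun_prop), Measure.map_map (by fun_prop) (by fun_prop)] at h3
  rw [← h2]
  exact h3.symm


/-- Laurent–Massart type bound for the Gaussian quadratic form `‖Cᵀ w‖²`, where `L` bounds the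
spectral norm of `Cᵀ C`. -/
lemma gaussian_quadratic_tail {N : ℕ} {κ : Type*} [Fintype κ] [Nonempty κ]
    (C : Matrix (Fin N) κ ℝ) (σ L t : ℝ) (hσ : 0 < σ) (ht : 0 ≤ t)
    (hL : ∀ c : κ → ℝ, ∑ i, (∑ k, C i k * c k) ^ 2 ≤ L * ∑ k, c k ^ 2) :
    (Measure.pi fun _ : Fin N => gaussianReal 0 (σ ^ 2).toNNReal).real
      {w | σ ^ 2 * (∑ k, ∑ i, C i k ^ 2 + 2 * L * (2 * t + Real.sqrt (Fintype.card κ * t))) <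
        ∑ k, (∑ i, C i k * w i) ^ 2} ≤ Real.exp (-t) := by
  classical
  obtain ⟨b, m, hquad, htr, heig⟩ := exists_diagonalization C
  have hcol : ∀ k, ∑ i, C i k ^ 2 ≤ L := fun k => by
    simpa [Pi.single_apply] using hL (Pi.single k 1)
  have hL0 : 0 ≤ L :=
    (sum_nonneg fun _ _ => sq_nonneg _).trans (hcol (Classical.arbitrary κ))
  have hm0 : ∀ l, 0 ≤ m l := fun l => by
    obtain ⟨c, h1, -⟩ := heig l
    rw [← h1]; positivity
  have hmL : ∀ l, m l ≤ L := fun l => by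
    obtain ⟨c, h1, h2⟩ := heig l
    have := hL c
    rw [h1, h2] at this
    nlinarith [hm0 l]
  have hsum : ∑ l, m l ≤ Fintype.card κ * L := by
    rw [htr]
    calc _ ≤ ∑ _k : κ, L := sum_le_sum fun k _ => hcol k
      _ = _ := by simp
  have key := weighted_chisq_tail m L (Fintype.card κ) t hm0 hmL
    (by exact_mod_cast Fintype.card_pos) hsum ht
  rw [pi_gaussian_eq_map σ b, map_measureReal_apply (by fun_prop)
    (measurableSet_lt (by fun_prop) (by fun_prop))]
  refine le_trans (le_of_eq ?_) key
  congr 1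
  ext x
  have h1 : ∑ k, (∑ i, C i k * (σ * (∑ l, x l • b l) i)) ^ 2 = σ ^ 2 * ∑ l, m l * x l ^ 2 := by
    rw [← hquad, mul_sum]
    refine sum_congr rfl fun k _ => ?_
    rw [← mul_pow, mul_sum]
    congr 1
    exact sum_congr rfl fun i _ => by ring
  simp only [Set.mem_preimage, Set.mem_ofPred_eq]
  rw [h1, htr]
  exact mul_lt_mul_iff_right₀ (by positivity)

/-- The quadratic form of `X_{G_j}ᵀ X_{G_j}` is at most `N` times the spectral norm of `Ψ_j`. -/
lemma sum_sq_le_specPsi {N M : ℕ} {Kj : Fin M → ℕ} (hN : 1 ≤ N)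
    (X : Matrix (Fin N) (GIdx Kj) ℝ) (j : Fin M) (c : Fin (Kj j) → ℝ) :
    ∑ i, (∑ t, X i ⟨j, t⟩ * c t) ^ 2 ≤ (N * specPsi X j) * ∑ t, c t ^ 2 := by
  classical
  have hN' : (0 : ℝ) < N := by exact_mod_cast hN
  have hbdd : BddAbove {x | ∃ v : GIdx Kj → ℝ, (∀ k : GIdx Kj, k.1 ≠ j → v k = 0) ∧
      (∑ k, (v k) ^ 2 = 1) ∧ x = (∑ i, (∑ k, X i k * v k) ^ 2) / N} := by
    refine ⟨(∑ i, ∑ k, X i k ^ 2) / N, ?_⟩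
    rintro x ⟨v, -, hv, rfl⟩
    gcongr with i _
    have := sum_mul_sq_le_sq_mul_sq univ (fun k => X i k) v
    rwa [hv, mul_one] at this
  rcases (sum_nonneg fun t _ => sq_nonneg (c t) : 0 ≤ ∑ t, c t ^ 2).eq_or_lt with h0 | hpos
  · have hc : ∀ t, c t = 0 := fun t => by
      have := (sum_eq_zero_iff_of_nonneg fun t _ => sq_nonneg (c t)).1 h0.symm t (mem_univ t)
      exact pow_eq_zero_iff two_ne_zero |>.1 this
    simp [hc]
  set r := Real.sqrt (∑ t, c t ^ 2) with hr
  have hr0 : 0 < r := Real.sqrt_pos.2 hpos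
  have hr2 : r ^ 2 = ∑ t, c t ^ 2 := Real.sq_sqrt hpos.le
  -- the unit vector `c / ‖c‖`, extended by zero outside group `j`
  let v : GIdx Kj → ℝ := fun k => if h : k.1 = j then c (h ▸ k.2) / r else 0
  have hvj : ∀ t, v ⟨j, t⟩ = c t / r := fun t => by simp [v]
  have hv0 : ∀ k : GIdx Kj, k.1 ≠ j → v k = 0 := fun k hk => by simp [v, hk]
  have hsum : ∀ f : GIdx Kj → ℝ, (∀ k : GIdx Kj, k.1 ≠ j → f k = 0) →
      ∑ k, f k = ∑ t, f ⟨j, t⟩ := fun f hf => by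
    rw [Fintype.sum_sigma]
    exact sum_eq_single j (fun a _ ha => sum_eq_zero fun t _ => hf ⟨a, t⟩ ha) (by simp)
  have hle : (∑ i, (∑ k, X i k * v k) ^ 2) / N ≤ specPsi X j := by
    refine le_csSup hbdd ⟨v, hv0, ?_, rfl⟩
    rw [hsum _ fun k hk => by simp [hv0 k hk]]
    simp_rw [hvj, div_pow]
    rw [← sum_div, ← hr2, div_self (by positivity)]
  have heq : ∑ i, (∑ k, X i k * v k) ^ 2 = (∑ i, (∑ t, X i ⟨j, t⟩ * c t) ^ 2) / r ^ 2 := by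
    rw [sum_div]
    refine sum_congr rfl fun i _ => ?_
    rw [hsum _ fun k hk => by simp [hv0 k hk], ← div_pow, sum_div]
    simp_rw [hvj, mul_div_assoc]
  rw [heq, div_le_iff₀ hN', div_le_iff₀ (by positivity), hr2] at hle
  linarith

/-! ### The deterministic inequality -/

lemma gnorm_nonneg {M : ℕ} {Kj : Fin M → ℕ} (β : GIdx Kj → ℝ) (j : Fin M) : 0 ≤ gnorm β j :=
  Real.sqrt_nonneg _

lemma gnorm_eq_norm {M : ℕ} {Kj : Fin M → ℕ} (β : GIdx Kj → ℝ) (j : Fin M) :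
    gnorm β j = ‖WithLp.toLp 2 fun t => β ⟨j, t⟩‖ := by
  simp [gnorm, EuclideanSpace.norm_eq]

lemma gnorm_add_le {M : ℕ} {Kj : Fin M → ℕ} (α β : GIdx Kj → ℝ) (j : Fin M) :
    gnorm (α + β) j ≤ gnorm α j + gnorm β j := by
  simp only [gnorm_eq_norm]
  exact norm_add_le (WithLp.toLp 2 fun t => α ⟨j, t⟩) (WithLp.toLp 2 fun t => β ⟨j, t⟩)

lemma gnorm_neg {M : ℕ} {Kj : Fin M → ℕ} (β : GIdx Kj → ℝ) (j : Fin M) :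
    gnorm (-β) j = gnorm β j := by simp [gnorm]

/-- The deterministic half: on the event where the noise correlation of each group is at most
`N λ_j / 2`, every minimizer obeys the oracle inequality. -/
lemma oracle_of_noise_bound {N M : ℕ} {Kj : Fin M → ℕ} (hN : 1 ≤ N)
    (X : Matrix (Fin N) (GIdx Kj) ℝ) (βstar : GIdx Kj → ℝ) (w : Fin N → ℝ) (lam : Fin M → ℝ)
    (hlam : ∀ j, 0 < lam j)
    (hw : ∀ j, ∑ t, (∑ i, X i ⟨j, t⟩ * w i) ^ 2 ≤ (N * lam j / 2) ^ 2)
    (b : GIdx Kj → ℝ) (hb : IsGLSol X (fun i => X.mulVec βstar i + w i) lam b)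
    (β : GIdx Kj → ℝ) :
    (∑ i, (X.mulVec (b - βstar) i) ^ 2) / N + ∑ j, lam j * gnorm (b - β) j ≤
      (∑ i, (X.mulVec (β - βstar) i) ^ 2) / N +
        4 * ∑ j ∈ Finset.univ.filter (fun j => gnorm β j ≠ 0),
          lam j * min (gnorm β j) (gnorm (b - β) j) := by
  have hN' : (0 : ℝ) < N := by exact_mod_cast hN
  have hmin := hb β
  unfold glObj at hmin
  -- the last sum does not involve `γ` and cancels in the comparison
  have hexp : ∀ γ : GIdx Kj → ℝ, ∑ i, (X.mulVec γ i - (X.mulVec βstar i + w i)) ^ 2 =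
      ∑ i, (X.mulVec (γ - βstar) i) ^ 2 - 2 * ∑ i, w i * X.mulVec γ i +
        ∑ i, (2 * w i * X.mulVec βstar i + w i ^ 2) := by
    intro γ
    rw [mul_sum, ← sum_sub_distrib, ← sum_add_distrib]
    refine sum_congr rfl fun i _ => ?_
    rw [Matrix.mulVec_sub, Pi.sub_apply]
    ring
  rw [hexp, hexp] at hmin
  have hcs : ∑ i, w i * X.mulVec b i - ∑ i, w i * X.mulVec β i ≤
      ∑ j, N * lam j / 2 * gnorm (b - β) j := by
    have h1 : ∑ i, w i * X.mulVec b i - ∑ i, w i * X.mulVec β i =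
        ∑ j, ∑ t, (∑ i, X i ⟨j, t⟩ * w i) * (b - β) ⟨j, t⟩ := by
      rw [← sum_sub_distrib,
        ← Fintype.sum_sigma (fun k : GIdx Kj => (∑ i, X i k * w i) * (b - β) k)]
      simp_rw [sum_mul]
      rw [sum_comm]
      refine sum_congr rfl fun i _ => ?_
      rw [← mul_sub, ← Pi.sub_apply, ← Matrix.mulVec_sub, Matrix.mulVec, dotProduct, mul_sum]
      exact sum_congr rfl fun k _ => by ring
    rw [h1]
    refine sum_le_sum fun j _ => (Real.sum_mul_le_sqrt_mul_sqrt _ _ _).trans ?_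
    have h2 : 0 ≤ N * lam j / 2 := by have := hlam j; positivity
    exact mul_le_mul_of_nonneg_right (Real.sqrt_le_iff.2 ⟨h2, hw j⟩) (gnorm_nonneg _ _)
  have hpt : ∀ j, lam j * gnorm (b - β) j + (lam j * gnorm β j - lam j * gnorm b j) ≤
      if gnorm β j ≠ 0 then 2 * (lam j * min (gnorm β j) (gnorm (b - β) j)) else 0 := by
    intro j
    have t1 : gnorm (b - β) j ≤ gnorm b j + gnorm β j := by
      have := gnorm_add_le b (-β) j
      rwa [gnorm_neg, ← sub_eq_add_neg] at this
    have t2 : gnorm β j ≤ gnorm b j + gnorm (b - β) j := by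
      have := gnorm_add_le b (-(b - β)) j
      rwa [gnorm_neg, show b + -(b - β) = β by abel] at this
    have hl := (hlam j).le
    split_ifs with h
    · have : gnorm (b - β) j + gnorm β j - gnorm b j ≤
          2 * min (gnorm β j) (gnorm (b - β) j) := by
        rcases min_cases (gnorm β j) (gnorm (b - β) j) with ⟨h, -⟩ | ⟨h, -⟩ <;> rw [h] <;> linarith
      have := mul_le_mul_of_nonneg_left this hl
      linarith
    · have : gnorm (b - β) j + gnorm β j - gnorm b j ≤ 0 := by
        simp only [ne_eq, not_not] at h
        linarith
      have := mul_le_mul_of_nonneg_left this hl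
      linarith
  have hpen := sum_le_sum fun j (_ : j ∈ univ) => hpt j
  rw [sum_add_distrib, sum_sub_distrib, ← sum_filter, ← mul_sum] at hpen
  have hcs' : 2 * (∑ i, w i * X.mulVec b i) / N - 2 * (∑ i, w i * X.mulVec β i) / N ≤
      ∑ j, lam j * gnorm (b - β) j := by
    rw [← sub_div, div_le_iff₀ hN', ← mul_sub]
    refine (mul_le_mul_of_nonneg_left hcs zero_le_two).trans_eq ?_
    rw [mul_sum, sum_mul]
    exact sum_congr rfl fun j _ => by ring
  rw [add_div, add_div, sub_div, sub_div] at hmin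
  linarith

/-- with probability at least `1 − 2M^{1−q}`, every Group Lasso solution `β̂`
satisfies, simultaneously for all `β`,
`(1/N)‖X(β̂ − β*)‖² + Σ_j λ_j‖β̂^j − β^j‖
  ≤ (1/N)‖X(β − β*)‖² + 4 Σ_{j∈J(β)} λ_j min(‖β^j‖, ‖β̂^j − β^j‖)`. -/
theorem group_lasso_basic_oracle_inequality
    {N M : ℕ} {Kj : Fin M → ℕ} (hM : 2 ≤ M) (hN : 1 ≤ N) (hKj : ∀ j, 1 ≤ Kj j)
    (X : Matrix (Fin N) (GIdx Kj) ℝ) (βstar : GIdx Kj → ℝ)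
    {Ω : Type*} [MeasurableSpace Ω] (μ : Measure Ω) [IsProbabilityMeasure μ]
    (W : Ω → Fin N → ℝ) (σ : ℝ) (hσ : 0 < σ)
    (hW : Measure.map W μ = Measure.pi fun _ : Fin N => gaussianReal 0 (σ ^ 2).toNNReal)
    (q : ℝ) (hq : 1 < q) (lam : Fin M → ℝ) (hlam_pos : ∀ j, 0 < lam j)
    (hlam : ∀ j, 2 * σ / Real.sqrt N *
      Real.sqrt (trPsi X j + 2 * specPsi X j *
        (2 * q * Real.log M + Real.sqrt (Kj j * q * Real.log M))) ≤ lam j) :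
    ∃ A : Set Ω, MeasurableSet A ∧ 1 - 2 * (M : ℝ) ^ ((1 : ℝ) - q) ≤ (μ A).toReal ∧
      ∀ ω ∈ A, ∀ b : GIdx Kj → ℝ,
        IsGLSol X (fun i => X.mulVec βstar i + W ω i) lam b →
        ∀ β : GIdx Kj → ℝ,
          (∑ i, (X.mulVec (b - βstar) i) ^ 2) / N + ∑ j, lam j * gnorm (b - β) j ≤
            (∑ i, (X.mulVec (β - βstar) i) ^ 2) / N +
              4 * ∑ j ∈ Finset.univ.filter (fun j => gnorm β j ≠ 0),
                lam j * min (gnorm β j) (gnorm (b - β) j) := by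
  classical
  have hN' : (0 : ℝ) < N := by exact_mod_cast hN
  have hM' : (0 : ℝ) < M := by exact_mod_cast (by omega : 0 < M)
  have hlog : 0 ≤ Real.log M := Real.log_nonneg (by exact_mod_cast (by omega : 1 ≤ M))
  set ν := Measure.pi fun _ : Fin N => gaussianReal 0 (σ ^ 2).toNNReal with hν
  have hWm : AEMeasurable W μ := by
    by_contra h
    rw [Measure.map_of_not_aemeasurable h] at hW
    exact IsProbabilityMeasure.ne_zero ν hW.symm
  let bad : Fin M → Set (Fin N → ℝ) := fun j =>
    {w | (N * lam j / 2) ^ 2 < ∑ t, (∑ i, X i ⟨j, t⟩ * w i) ^ 2}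
  have hbad_meas : ∀ j, MeasurableSet (bad j) := fun j =>
    measurableSet_lt (by fun_prop) (by fun_prop)
  have hbad : ∀ j, ν.real (bad j) ≤ (M : ℝ) ^ (-q) := by
    intro j
    have : Nonempty (Fin (Kj j)) := ⟨⟨0, hKj j⟩⟩
    have htail := gaussian_quadratic_tail (Matrix.of fun i (t : Fin (Kj j)) => X i ⟨j, t⟩) σ
      (N * specPsi X j) (q * Real.log M) hσ (by positivity) (sum_sq_le_specPsi hN X j)
    rw [Real.rpow_def_of_pos hM', show Real.log M * -q = -(q * Real.log M) by ring]
    refine le_trans (measureReal_mono ?_) htail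
    intro w hw
    refine lt_of_le_of_lt ?_
      (show (N * lam j / 2) ^ 2 < ∑ t, (∑ i, X i ⟨j, t⟩ * w i) ^ 2 from hw)
    simp only [Matrix.of_apply, Fintype.card_fin]
    set D := trPsi X j + 2 * specPsi X j *
      (2 * q * Real.log M + Real.sqrt (Kj j * q * Real.log M)) with hD
    have h1 : σ ^ 2 * (∑ t, ∑ i, X i ⟨j, t⟩ ^ 2 + 2 * (N * specPsi X j) *
        (2 * (q * Real.log M) + Real.sqrt (Kj j * (q * Real.log M)))) = σ ^ 2 * (N * D) := by
      have : ∑ t, ∑ i, X i ⟨j, t⟩ ^ 2 = N * trPsi X j := by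
        rw [trPsi]; field_simp
      rw [this, hD, ← mul_assoc (Kj j : ℝ)]
      ring
    rw [h1]
    -- `D ≥ 0` in fact holds; if `D ≤ 0` the bound is immediate, so it need not be shown
    rcases le_or_gt D 0 with hD0 | hD0
    · have : σ ^ 2 * (N * D) ≤ 0 := by
        have := mul_nonpos_of_nonneg_of_nonpos hN'.le hD0
        exact mul_nonpos_of_nonneg_of_nonpos (sq_nonneg σ) this
      exact this.trans (sq_nonneg _)
    · have h2 := mul_le_mul_of_nonneg_left (hlam j) (by positivity : (0 : ℝ) ≤ N / 2)
      have h3 : σ ^ 2 * (N * D) = (N / 2 * (2 * σ / Real.sqrt N * Real.sqrt D)) ^ 2 := by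
        rw [mul_pow, mul_pow, div_pow _ (Real.sqrt N), Real.sq_sqrt hN'.le, Real.sq_sqrt hD0.le]
        field_simp
      rw [h3]
      refine pow_le_pow_left₀ (by positivity) (h2.trans_eq (by ring)) 2
  have hunion : ν.real (⋃ j, bad j) ≤ 2 * (M : ℝ) ^ (1 - q) := by
    calc _ ≤ ∑ j, ν.real (bad j) := measureReal_iUnion_fintype_le _
      _ ≤ ∑ _j : Fin M, (M : ℝ) ^ (-q) := sum_le_sum fun j _ => hbad j
      _ = (M : ℝ) ^ (1 - q) := by
        rw [sub_eq_add_neg, Real.rpow_add hM', Real.rpow_one]; simp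
      _ ≤ _ := by
        have : 0 ≤ (M : ℝ) ^ (1 - q) := by positivity
        linarith
  have hgood_meas : MeasurableSet (⋃ j, bad j)ᶜ := (MeasurableSet.iUnion hbad_meas).compl
  -- `W` is only a.e. measurable, so the event is replaced by a measurable subset of full measure
  obtain ⟨A, hAsub, hA, hAeq⟩ :=
    (hWm.nullMeasurableSet_preimage hgood_meas).exists_measurable_subset_ae_eq
  refine ⟨A, hA, ?_, fun ω hω b hb β => ?_⟩
  · have : (μ A).toReal = ν.real (⋃ j, bad j)ᶜ := by
      rw [measure_congr hAeq, ← Measure.map_apply_of_aemeasurable hWm hgood_meas, hW]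
      rfl
    rw [this, probReal_compl_eq_one_sub (MeasurableSet.iUnion hbad_meas)]
    linarith
  · refine oracle_of_noise_bound hN X βstar (W ω) lam hlam_pos (fun j => ?_) b hb β
    have h := hAsub hω
    simp only [Set.mem_preimage, Set.mem_compl_iff, Set.mem_iUnion, not_exists] at h
    exact not_lt.1 (h j)

end GroupLasso
end
end

section
/- With probability at least 1 − 2M^{1−q}, every Group Lasso solution β̂ satisfies the slow-rate bound (1/N)‖X(β̂ − β*)‖² ≤ 4‖β*‖_{2,1} · max_{j=1,…,M} λ_j, with no assumption on the design matrix X beyond the choice of the λ_j. -/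
/-!
Write `Xⱼ` for the columns of `X` in group `j`. Comparing the objective at `b` and at `β*` gives
`‖X(b - β*)‖² / N ≤ 2⟨X(b - β*), W⟩ / N + 2 ∑ λⱼ (‖β*ʲ‖ - ‖bʲ‖)`. As soon as `‖Xⱼᵀ W‖ / N ≤ λⱼ` for
every `j`, Cauchy-Schwarz in each group and the triangle inequality bound the right-hand side by
`4 ∑ λⱼ ‖β*ʲ‖` (`slow_rate_of_noise`).

It remains to control `‖Xⱼᵀ W‖²`. In an orthonormal eigenbasis of `Xⱼ Xⱼᵀ` (`exists_diag`), and by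
rotation invariance of the Gaussian law, it is `σ²` times a weighted chi-square variable
`∑ mₗ gₗ²` with `∑ mₗ = N tr Ψⱼ` and `0 ≤ mₗ ≤ S = N ⦀Ψⱼ⦀`. The Chernoff bound with parameter
`1 / (4S)`, together with `(1 - 2c)^{-1/2} ≤ exp (2c)` for `0 ≤ c ≤ 1/4`, gives
`P(∑ mₗ gₗ² > 2 ∑ mₗ + 4 S x) ≤ exp (-x)` (`chiSq_tail`). With `x = q log M` the threshold, times `σ²`,
is at most `(N λⱼ)²`, so each group fails with probability at most `M^{-q}`, and a union bound
over the `M` groups gives `M^{1-q}`.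
-/


open MeasureTheory ProbabilityTheory Finset

noncomputable section

namespace GroupLasso

/-! ### Weighted chi-square tails -/

/-- Squared-Gaussian moment bound `(1 - 2c)^{-1/2} ≤ exp (2c)`, valid for `0 ≤ c ≤ 1/4`. -/
lemma gaussian_exp_sq (c : ℝ) (hc : c ≤ 1 / 4) (hc0 : 0 ≤ c) :
    Integrable (fun x : ℝ => Real.exp (c * x ^ 2)) (gaussianReal 0 1) ∧
      ∫ x, Real.exp (c * x ^ 2) ∂(gaussianReal 0 1) ≤ Real.exp (2 * c) := by
  have hb : 0 < 1 / 2 - c := by linarith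
  have key : ∀ x : ℝ, gaussianPDFReal 0 1 x • Real.exp (c * x ^ 2)
      = (Real.sqrt (2 * Real.pi))⁻¹ * Real.exp (-(1 / 2 - c) * x ^ 2) := by
    intro x
    simp only [gaussianPDFReal, NNReal.coe_one, mul_one, sub_zero, smul_eq_mul]
    rw [mul_assoc, ← Real.exp_add]
    ring_nf
  constructor
  · rw [gaussianReal_of_var_ne_zero 0 one_ne_zero,
      integrable_withDensity_iff_integrable_smul' (measurable_gaussianPDF 0 1)
        (ae_of_all _ fun _ => gaussianPDF_lt_top)]
    simp only [toReal_gaussianPDF, key]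
    exact (integrable_exp_neg_mul_sq hb).const_mul _
  · rw [integral_gaussianReal_eq_integral_smul one_ne_zero]
    simp only [key]
    rw [integral_const_mul, integral_gaussian, ← Real.sqrt_inv, ← Real.sqrt_mul (by positivity)]
    refine (Real.sqrt_le_left (Real.exp_pos _).le).2 ?_
    have h1 : (2 * Real.pi)⁻¹ * (Real.pi / (1 / 2 - c)) = 1 / (1 - 2 * c) := by
      have := Real.pi_pos.ne'
      have : 1 - 2 * c ≠ 0 := by linarith
      field_simp
    rw [h1, ← Real.exp_nat_mul, div_le_iff₀ (by linarith)]
    have h2 := Real.add_one_le_exp ((2 : ℕ) * (2 * c))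
    push_cast at h2 ⊢
    nlinarith

/-- Upper tail of a weighted chi-square variable with weights in `[0, S]`. The statement also covers
`S = 0`, where the strict inequality makes the event empty. -/
lemma chiSq_tail {n : ℕ} (m : Fin n → ℝ) (S x : ℝ) (hm0 : ∀ i, 0 ≤ m i) (hmS : ∀ i, m i ≤ S)
    (hS : 0 ≤ S) :
    (Measure.pi fun _ : Fin n => gaussianReal 0 1).real
      {w | 2 * ∑ i, m i + 4 * S * x < ∑ i, m i * w i ^ 2} ≤ Real.exp (-x) := by
  rcases hS.eq_or_lt with rfl | hS
  · have hm : ∀ i, m i = 0 := fun i => le_antisymm (hmS i) (hm0 i)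
    simp [hm, Real.exp_nonneg]
  have hc : ∀ i, m i / (4 * S) ≤ 1 / 4 := fun i => by
    rw [div_le_div_iff₀ (by positivity) (by norm_num)]; linarith [hmS i]
  have hc0 : ∀ i, 0 ≤ m i / (4 * S) := fun i => div_nonneg (hm0 i) (by positivity)
  have hexp : (fun w : Fin n → ℝ => Real.exp (1 / (4 * S) * ∑ i, m i * w i ^ 2))
      = fun w => ∏ i, Real.exp (m i / (4 * S) * w i ^ 2) := by
    funext w
    rw [← Real.exp_sum, Finset.mul_sum]
    congr 1
    exact Finset.sum_congr rfl fun i _ => by ring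
  have h_integrable : Integrable (fun w : Fin n → ℝ => Real.exp (1 / (4 * S) * ∑ i, m i * w i ^ 2))
      (Measure.pi fun _ : Fin n => gaussianReal 0 1) := by
    rw [hexp]
    exact Integrable.fintype_prod (f := fun i y => Real.exp (m i / (4 * S) * y ^ 2))
      fun i => (gaussian_exp_sq _ (hc i) (hc0 i)).1
  have hmgf : mgf (fun w : Fin n → ℝ => ∑ i, m i * w i ^ 2)
      (Measure.pi fun _ : Fin n => gaussianReal 0 1) (1 / (4 * S))
      ≤ Real.exp ((∑ i, m i) / (2 * S)) := by
    rw [mgf, hexp, integral_fintype_prod_eq_prod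
      (f := fun i (y : ℝ) => Real.exp (m i / (4 * S) * y ^ 2))]
    calc _ ≤ ∏ i, Real.exp (2 * (m i / (4 * S))) :=
          Finset.prod_le_prod (fun i _ => integral_nonneg fun _ => Real.exp_nonneg _)
            fun i _ => (gaussian_exp_sq _ (hc i) (hc0 i)).2
      _ = _ := by
          rw [← Real.exp_sum, Finset.sum_div]
          congr 1
          exact Finset.sum_congr rfl fun i _ => by field_simp; ring
  have hch := measure_ge_le_exp_mul_mgf (2 * ∑ i, m i + 4 * S * x) (by positivity) h_integrable
  have hsub : {w : Fin n → ℝ | 2 * ∑ i, m i + 4 * S * x < ∑ i, m i * w i ^ 2}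
      ⊆ {w | 2 * ∑ i, m i + 4 * S * x ≤ ∑ i, m i * w i ^ 2} := by
    intro w hw
    simp only [Set.mem_ofPred_eq] at hw ⊢
    exact hw.le
  refine (measureReal_mono hsub).trans (hch.trans ?_)
  calc _ ≤ Real.exp (-(1 / (4 * S)) * (2 * ∑ i, m i + 4 * S * x)) * Real.exp ((∑ i, m i) / (2 * S)) :=
        mul_le_mul_of_nonneg_left hmgf (Real.exp_nonneg _)
    _ = Real.exp (-x) := by
        rw [← Real.exp_add]
        congr 1
        field_simp
        ring

/-! ### Gaussian quadratic forms -/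

/-- Diagonalization of the quadratic form `w ↦ ‖Aᵀ w‖²` in an orthonormal basis: its coefficients
are nonnegative, sum to the squared Frobenius norm of `A`, and are bounded by any bound on
`‖A v‖² / ‖v‖²`. -/
lemma exists_diag {n : ℕ} {κ : Type*} [Fintype κ] (A : Matrix (Fin n) κ ℝ) (S : ℝ) (hS0 : 0 ≤ S)
    (hS : ∀ v : κ → ℝ, ∑ i, (∑ t, A i t * v t) ^ 2 ≤ S * ∑ t, v t ^ 2) :
    ∃ (b : OrthonormalBasis (Fin n) ℝ (EuclideanSpace ℝ (Fin n))) (m : Fin n → ℝ),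
      (∀ i, 0 ≤ m i) ∧ (∀ i, m i ≤ S) ∧ (∑ i, m i = ∑ t, ∑ i, A i t ^ 2) ∧
      ∀ x : Fin n → ℝ,
        ∑ t, (∑ i, A i t * (∑ l, x l • b l) i) ^ 2 = ∑ l, m l * x l ^ 2 := by
  have hC := Matrix.posSemidef_self_mul_conjTranspose A
  set b := hC.1.eigenvectorBasis with hb
  set m := hC.1.eigenvalues with hm
  have hev : ∀ l, (A * A.conjTranspose).mulVec (b l).ofLp = m l • (b l).ofLp :=
    fun l => hC.1.mulVec_eigenvectorBasis l
  have hort : ∀ l k, (b l).ofLp ⬝ᵥ (b k).ofLp = if l = k then (1 : ℝ) else 0 := by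
    intro l k
    have := orthonormal_iff_ite.1 b.orthonormal l k
    rw [← this, EuclideanSpace.inner_eq_star_dotProduct]
    simp [dotProduct_comm]
  have hev' : ∀ l i, ∑ t, A i t * (∑ j, A j t * b l j) = m l * b l i := by
    intro l i
    have := congrFun (hev l) i
    rw [← Matrix.mulVec_mulVec] at this
    simpa [Matrix.mulVec, dotProduct] using this
  have hgram : ∀ l k, ∑ t, (∑ i, A i t * b l i) * (∑ i, A i t * b k i)
      = if l = k then m l else 0 := by
    intro l k
    have h1 : ∑ t, (∑ i, A i t * b l i) * (∑ i, A i t * b k i)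
        = ∑ i, b l i * ∑ t, A i t * (∑ j, A j t * b k j) := by
      simp_rw [Finset.sum_mul (s := (Finset.univ : Finset (Fin n)))]
      rw [Finset.sum_comm]
      refine Finset.sum_congr rfl fun i _ => ?_
      rw [Finset.mul_sum]
      exact Finset.sum_congr rfl fun t _ => by ring
    have h2 := hort l k
    simp only [dotProduct] at h2
    rw [h1]
    simp_rw [hev']
    calc _ = m k * ∑ i, b l i * b k i := by
          rw [Finset.mul_sum]; exact Finset.sum_congr rfl fun i _ => by ring
      _ = _ := by
          rw [h2]; split_ifs with h
          · simp [h]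
          · simp
  have hm0 : ∀ l, 0 ≤ m l := hC.eigenvalues_nonneg
  refine ⟨b, m, hm0, fun l => ?_, ?_, fun x => ?_⟩
  · -- test the bound on `v = Aᵀ b_l`: it reads `m l ^ 2 ≤ S * m l`
    have h := hS fun t => ∑ i, A i t * b l i
    simp_rw [hev'] at h
    have h3 : ∑ t, (∑ i, A i t * b l i) ^ 2 = m l := by
      simpa [sq] using hgram l l
    have h4 : ∑ i, (m l * b l i) ^ 2 = m l ^ 2 := by
      have := hort l l
      simp only [dotProduct, if_true] at this
      simp_rw [mul_pow]
      rw [← Finset.mul_sum]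
      simp only [sq (b l _), this, mul_one]
    rw [h3, h4] at h
    rcases (hm0 l).eq_or_lt with h0 | h0
    · rw [← h0]; exact hS0
    · nlinarith
  · have h := hC.1.trace_eq_sum_eigenvalues
    simp only [RCLike.ofReal_real_eq_id, id] at h
    rw [← hm] at h
    rw [← h, Finset.sum_comm]
    simp [Matrix.trace, Matrix.mul_apply, sq]
  · have h1 : ∀ t, ∑ i, A i t * (∑ l, x l • b l) i = ∑ l, x l * ∑ i, A i t * b l i := by
      intro t
      simp only [WithLp.ofLp_sum, WithLp.ofLp_smul, Finset.sum_apply, Pi.smul_apply, smul_eq_mul,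
        Finset.mul_sum]
      rw [Finset.sum_comm]
      exact Finset.sum_congr rfl fun l _ => Finset.sum_congr rfl fun i _ => by ring
    simp_rw [h1, sq, Finset.sum_mul_sum]
    rw [Finset.sum_comm]
    refine Finset.sum_congr rfl fun l _ => ?_
    rw [Finset.sum_comm]
    have : ∀ k, ∑ t, x l * (∑ i, A i t * b l i) * (x k * ∑ i, A i t * b k i)
        = if l = k then m l * (x l * x k) else 0 := by
      intro k
      calc _ = x l * x k * ∑ t, (∑ i, A i t * b l i) * (∑ i, A i t * b k i) := by
            rw [Finset.mul_sum]; exact Finset.sum_congr rfl fun t _ => by ring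
        _ = _ := by rw [hgram]; split_ifs <;> ring
    simp [this]

/-- Upper tail of `‖Aᵀ w‖²` for a standard Gaussian vector `w`; by rotation invariance this is the
weighted chi-square tail. -/
lemma quad_tail {n : ℕ} {κ : Type*} [Fintype κ] (A : Matrix (Fin n) κ ℝ) (S x : ℝ) (hS0 : 0 ≤ S)
    (hS : ∀ v : κ → ℝ, ∑ i, (∑ t, A i t * v t) ^ 2 ≤ S * ∑ t, v t ^ 2) :
    (Measure.pi fun _ : Fin n => gaussianReal 0 1).real
      {w | 2 * ∑ t, ∑ i, A i t ^ 2 + 4 * S * x < ∑ t, (∑ i, A i t * w i) ^ 2}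
      ≤ Real.exp (-x) := by
  obtain ⟨b, m, hm0, hmS, hsum, hq⟩ := exists_diag A S hS0 hS
  set E : Set (EuclideanSpace ℝ (Fin n)) :=
    {w | 2 * ∑ t, ∑ i, A i t ^ 2 + 4 * S * x < ∑ t, (∑ i, A i t * w i) ^ 2} with hE
  have hEm : MeasurableSet E := measurableSet_lt (by fun_prop) (by fun_prop)
  have h1 := map_pi_eq_stdGaussian (ι := Fin n)
  rw [stdGaussian_eq_map_pi_orthonormalBasis b] at h1
  have h2 := congrArg (fun ν => ν.real E) h1
  simp only at h2
  rw [map_measureReal_apply (by fun_prop) hEm, map_measureReal_apply (by fun_prop) hEm] at h2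
  have h3 := chiSq_tail m S x hm0 hmS hS0
  have e2 : (fun x : Fin n → ℝ => ∑ i, x i • b i) ⁻¹' E
      = {w | 2 * ∑ i, m i + 4 * S * x < ∑ i, m i * w i ^ 2} := by
    ext w
    simp only [hE, Set.mem_preimage, Set.mem_ofPred_eq, hq, hsum]
  rw [e2] at h2
  exact h2.le.trans h3

/-- The same tail for i.i.d. `N(0, σ²)` components. -/
lemma quad_tail_scaled {n : ℕ} {κ : Type*} [Fintype κ] (A : Matrix (Fin n) κ ℝ) (S x σ : ℝ)
    (hσ : 0 < σ) (hS0 : 0 ≤ S)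
    (hS : ∀ v : κ → ℝ, ∑ i, (∑ t, A i t * v t) ^ 2 ≤ S * ∑ t, v t ^ 2) :
    (Measure.pi fun _ : Fin n => gaussianReal 0 (σ ^ 2).toNNReal).real
      {w | σ ^ 2 * (2 * ∑ t, ∑ i, A i t ^ 2 + 4 * S * x) < ∑ t, (∑ i, A i t * w i) ^ 2}
      ≤ Real.exp (-x) := by
  have hg : gaussianReal 0 (σ ^ 2).toNNReal = (gaussianReal 0 1).map (fun y => σ * y) := by
    rw [gaussianReal_map_const_mul]
    congr 1
    · simp
    · ext; simp [Real.coe_toNNReal _ (sq_nonneg σ)]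
  have hmap : (Measure.pi fun _ : Fin n => gaussianReal 0 (σ ^ 2).toNNReal)
      = (Measure.pi fun _ : Fin n => gaussianReal 0 1).map (fun w i => σ * w i) := by
    have : ∀ i : Fin n, SigmaFinite ((gaussianReal 0 1).map (fun y => σ * y)) := by
      intro i; rw [← hg]; infer_instance
    rw [Measure.pi_map_pi (f := fun _ y => σ * y) (fun _ => by fun_prop)]
    simp_rw [hg]
  rw [hmap, map_measureReal_apply (by fun_prop) (measurableSet_lt (by fun_prop) (by fun_prop))]
  refine le_trans (le_of_eq ?_) (quad_tail A S x hS0 hS)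
  congr 1
  ext w
  have h : ∑ t, (∑ i, A i t * (σ * w i)) ^ 2 = σ ^ 2 * ∑ t, (∑ i, A i t * w i) ^ 2 := by
    rw [Finset.mul_sum]
    refine Finset.sum_congr rfl fun t _ => ?_
    rw [← mul_pow, Finset.mul_sum]
    congr 1
    exact Finset.sum_congr rfl fun i _ => by ring
  simp only [Set.mem_preimage, Set.mem_ofPred_eq, h]
  exact mul_lt_mul_iff_right₀ (by positivity)

/-! ### The deterministic inequality -/

/-- The value `specPsi X j` is a genuine bound on the quadratic form of `Ψ_j` (the supremum defining it is
bounded above), and it is nonnegative. -/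
lemma specPsi_bound {N M : ℕ} {Kj : Fin M → ℕ} (hN : 1 ≤ N) (X : Matrix (Fin N) (GIdx Kj) ℝ)
    (j : Fin M) : 0 ≤ specPsi X j ∧ ∀ v : Fin (Kj j) → ℝ,
      ∑ i, (∑ t, X i ⟨j, t⟩ * v t) ^ 2 ≤ (N * specPsi X j) * ∑ t, v t ^ 2 := by
  have hN' : (0 : ℝ) < N := by exact_mod_cast hN
  have hbdd : BddAbove {x | ∃ v : GIdx Kj → ℝ, (∀ k : GIdx Kj, k.1 ≠ j → v k = 0) ∧
      (∑ k, (v k) ^ 2 = 1) ∧ x = (∑ i, (∑ k, X i k * v k) ^ 2) / N} := by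
    refine ⟨(∑ i, ∑ k, X i k ^ 2) / N, ?_⟩
    rintro x ⟨v, -, hv, rfl⟩
    refine div_le_div_of_nonneg_right (Finset.sum_le_sum fun i _ => ?_) hN'.le
    have := Finset.sum_mul_sq_le_sq_mul_sq Finset.univ (fun k => X i k) v
    rwa [hv, mul_one] at this
  refine ⟨Real.sSup_nonneg ?_, fun v => ?_⟩
  · rintro x ⟨v, -, -, rfl⟩
    positivity
  · rcases (Finset.sum_nonneg fun t _ => sq_nonneg (v t) :
      0 ≤ ∑ t, v t ^ 2).eq_or_lt with h0 | h0
    · have hv : ∀ t, v t = 0 := fun t => by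
        have := (Finset.sum_eq_zero_iff_of_nonneg fun t _ => sq_nonneg (v t)).1 h0.symm t
          (Finset.mem_univ t)
        exact pow_eq_zero_iff (two_ne_zero) |>.1 this
      simp [hv]
    · -- extend `v / ‖v‖` by zero outside group `j`
      set r := Real.sqrt (∑ t, v t ^ 2) with hr
      have hr2 : r ^ 2 = ∑ t, v t ^ 2 := Real.sq_sqrt h0.le
      have hr0 : 0 < r := Real.sqrt_pos.2 h0
      let u : GIdx Kj → ℝ := fun k => if h : k.1 = j then v (h ▸ k.2) / r else 0
      have huj : ∀ t, u ⟨j, t⟩ = v t / r := fun t => by simp [u]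
      have hun : ∀ k : GIdx Kj, k.1 ≠ j → u k = 0 := fun k hk => by simp [u, hk]
      have hsum : ∀ f : GIdx Kj → ℝ, (∀ k, k.1 ≠ j → f k = 0) →
          ∑ k, f k = ∑ t, f ⟨j, t⟩ := by
        intro f hf
        rw [Fintype.sum_sigma]
        refine Finset.sum_eq_single j (fun j' _ hj' => ?_) (by simp)
        exact Finset.sum_eq_zero fun t _ => hf _ hj'
      have hle := le_csSup hbdd ⟨u, hun, ?_, rfl⟩
      · have h1 : ∀ i, ∑ k, X i k * u k = (∑ t, X i ⟨j, t⟩ * v t) / r := by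
          intro i
          rw [hsum _ fun k hk => by rw [hun k hk, mul_zero], Finset.sum_div]
          exact Finset.sum_congr rfl fun t _ => by rw [huj, mul_div_assoc]
        change _ ≤ specPsi X j at hle
        simp_rw [h1, div_pow] at hle
        rw [← Finset.sum_div, hr2, div_div, div_le_iff₀ (by positivity)] at hle
        linarith
      · rw [hsum _ fun k hk => by rw [hun k hk]; ring]
        simp_rw [huj, div_pow]
        rw [← Finset.sum_div, hr2, div_self h0.ne']

lemma gnorm_sub_le {M : ℕ} {Kj : Fin M → ℕ} (a b : GIdx Kj → ℝ) (j : Fin M) :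
    gnorm (a - b) j ≤ gnorm a j + gnorm b j := by
  have := norm_sub_le (WithLp.toLp 2 fun t => a ⟨j, t⟩ : EuclideanSpace ℝ (Fin (Kj j)))
    (WithLp.toLp 2 fun t => b ⟨j, t⟩)
  simpa [EuclideanSpace.norm_eq, gnorm] using this

/-- Deterministic oracle step: on the event that each block of the noise correlation `Xᵀ w / N` has
norm at most `λ_j`, comparing the objective at `b` and at `β*` gives the slow rate. -/
lemma slow_rate_of_noise {N M : ℕ} {Kj : Fin M → ℕ} (hN : 1 ≤ N)
    (X : Matrix (Fin N) (GIdx Kj) ℝ) (βstar : GIdx Kj → ℝ) (w : Fin N → ℝ)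
    (lam : Fin M → ℝ) (hlam_pos : ∀ j, 0 < lam j)
    (hw : ∀ j, ∑ t, (∑ i, X i ⟨j, t⟩ * w i) ^ 2 ≤ (N * lam j) ^ 2)
    (b : GIdx Kj → ℝ) (hb : IsGLSol X (fun i => X.mulVec βstar i + w i) lam b) :
    (∑ i, (X.mulVec (b - βstar) i) ^ 2) / N ≤
      4 * (∑ j, gnorm βstar j) * sSup (Set.range lam) := by
  have hN' : (0 : ℝ) < N := by exact_mod_cast hN
  set D := b - βstar with hD
  have hobj := hb βstar
  simp only [glObj] at hobj
  have e1 : ∑ i, (X.mulVec b i - (X.mulVec βstar i + w i)) ^ 2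
      = ∑ i, (X.mulVec D i) ^ 2 - 2 * ∑ i, X.mulVec D i * w i + ∑ i, w i ^ 2 := by
    rw [Finset.mul_sum, ← Finset.sum_sub_distrib, ← Finset.sum_add_distrib]
    refine Finset.sum_congr rfl fun i _ => ?_
    rw [hD, Matrix.mulVec_sub, Pi.sub_apply]
    ring
  have e2 : ∑ i, (X.mulVec βstar i - (X.mulVec βstar i + w i)) ^ 2 = ∑ i, w i ^ 2 :=
    Finset.sum_congr rfl fun i _ => by ring
  rw [e1, e2] at hobj
  have hcross : ∑ i, X.mulVec D i * w i ≤ N * ∑ j, lam j * gnorm D j := by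
    have h1 : ∑ i, X.mulVec D i * w i = ∑ j, ∑ t, D ⟨j, t⟩ * ∑ i, X i ⟨j, t⟩ * w i := by
      rw [← Fintype.sum_sigma (fun k : GIdx Kj => D k * ∑ i, X i k * w i)]
      simp only [Matrix.mulVec, dotProduct, Finset.sum_mul, Finset.mul_sum]
      rw [Finset.sum_comm]
      exact Finset.sum_congr rfl fun k _ => Finset.sum_congr rfl fun i _ => by ring
    rw [h1, Finset.mul_sum]
    refine Finset.sum_le_sum fun j _ => ?_
    have hcs := Real.sum_mul_le_sqrt_mul_sqrt Finset.univ (fun t => D ⟨j, t⟩)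
      (fun t => ∑ i, X i ⟨j, t⟩ * w i)
    have hs : Real.sqrt (∑ t, (∑ i, X i ⟨j, t⟩ * w i) ^ 2) ≤ N * lam j :=
      (Real.sqrt_le_left (mul_pos hN' (hlam_pos j)).le).2 (hw j)
    calc _ ≤ _ := hcs
      _ ≤ gnorm D j * (N * lam j) := mul_le_mul_of_nonneg_left hs (Real.sqrt_nonneg _)
      _ = _ := by ring
  have htri : ∑ j, lam j * gnorm D j
      ≤ ∑ j, lam j * gnorm b j + ∑ j, lam j * gnorm βstar j := by
    rw [← Finset.sum_add_distrib]
    refine Finset.sum_le_sum fun j _ => ?_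
    rw [← mul_add]
    exact mul_le_mul_of_nonneg_left (gnorm_sub_le _ _ j) (hlam_pos j).le
  have hmax : ∑ j, lam j * gnorm βstar j ≤ (∑ j, gnorm βstar j) * sSup (Set.range lam) := by
    rw [Finset.sum_mul]
    refine Finset.sum_le_sum fun j _ => ?_
    rw [mul_comm]
    exact mul_le_mul_of_nonneg_left
      (le_csSup (Set.finite_range lam).bddAbove (Set.mem_range_self j)) (Real.sqrt_nonneg _)
  have hcross' : (∑ i, X.mulVec D i * w i) / N ≤ ∑ j, lam j * gnorm D j := by
    rw [div_le_iff₀ hN']; linarith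
  rw [add_div, sub_div, mul_div_assoc] at hobj
  linarith

/-! ### The slow rate with high probability -/

/-- slow-rate bound. With probability at least `1 − 2M^{1−q}`, every Group Lasso
solution `β̂` satisfies `(1/N)‖X(β̂ − β*)‖² ≤ 4‖β*‖_{2,1}·max_j λ_j`, with no assumption on
the design matrix beyond the choice of the `λ_j`. -/
theorem group_lasso_slow_rate
    {N M : ℕ} {Kj : Fin M → ℕ} (hM : 2 ≤ M) (hN : 1 ≤ N) (hKj : ∀ j, 1 ≤ Kj j)
    (X : Matrix (Fin N) (GIdx Kj) ℝ) (βstar : GIdx Kj → ℝ)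
    {Ω : Type*} [MeasurableSpace Ω] (μ : Measure Ω) [IsProbabilityMeasure μ]
    (W : Ω → Fin N → ℝ) (σ : ℝ) (hσ : 0 < σ)
    (hW : Measure.map W μ = Measure.pi fun _ : Fin N => gaussianReal 0 (σ ^ 2).toNNReal)
    (q : ℝ) (hq : 1 < q) (lam : Fin M → ℝ) (hlam_pos : ∀ j, 0 < lam j)
    (hlam : ∀ j, 2 * σ / Real.sqrt N *
      Real.sqrt (trPsi X j + 2 * specPsi X j *
        (2 * q * Real.log M + Real.sqrt (Kj j * q * Real.log M))) ≤ lam j)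
    :
    ∃ A : Set Ω, MeasurableSet A ∧ 1 - 2 * (M : ℝ) ^ ((1 : ℝ) - q) ≤ (μ A).toReal ∧
      ∀ ω ∈ A, ∀ b : GIdx Kj → ℝ,
        IsGLSol X (fun i => X.mulVec βstar i + W ω i) lam b →
        (∑ i, (X.mulVec (b - βstar) i) ^ 2) / N ≤
          4 * (∑ j, gnorm βstar j) * sSup (Set.range lam) := by
  have hN' : (0 : ℝ) < N := by exact_mod_cast hN
  have hM' : (0 : ℝ) < M := by positivity
  have hlog : 0 ≤ q * Real.log M :=
    mul_nonneg (by linarith) (Real.log_nonneg (by exact_mod_cast (by omega : 1 ≤ M)))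
  have hWm : AEMeasurable W μ := by
    by_contra h
    rw [Measure.map_of_not_aemeasurable h] at hW
    exact IsProbabilityMeasure.ne_zero
      (Measure.pi fun _ : Fin N => gaussianReal 0 (σ ^ 2).toNNReal) hW.symm
  let B : Fin M → Set (Fin N → ℝ) := fun j =>
    {w | (N * lam j) ^ 2 < ∑ t, (∑ i, X i ⟨j, t⟩ * w i) ^ 2}
  have hBm : ∀ j, MeasurableSet (B j) := fun j =>
    measurableSet_lt (by fun_prop) (by fun_prop)
  have hBp : ∀ j, (Measure.pi fun _ : Fin N => gaussianReal 0 (σ ^ 2).toNNReal).real (B j)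
      ≤ (M : ℝ) ^ (-q) := by
    intro j
    obtain ⟨hs0, hs⟩ := specPsi_bound hN X j
    have ht := quad_tail_scaled (fun i t => X i ⟨j, t⟩) (N * specPsi X j) (q * Real.log M) σ hσ
      (by positivity) hs
    have hexp : Real.exp (-(q * Real.log M)) = (M : ℝ) ^ (-q) := by
      rw [Real.rpow_def_of_pos hM']; congr 1; ring
    rw [hexp] at ht
    refine le_trans (measureReal_mono ?_) ht
    have htr : ∑ t, ∑ i, X i ⟨j, t⟩ ^ 2 = N * trPsi X j := by
      rw [trPsi]; field_simp
    have htr0 : 0 ≤ trPsi X j := by unfold trPsi; positivity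
    intro w hw
    simp only [B, Set.mem_ofPred_eq] at hw ⊢
    refine lt_of_le_of_lt ?_ hw
    rw [htr]
    have hr0 := Real.sqrt_nonneg (Kj j * q * Real.log M)
    set r := Real.sqrt (Kj j * q * Real.log M)
    set T := trPsi X j + 2 * specPsi X j * (2 * q * Real.log M + r) with hT
    have hsr : 0 ≤ specPsi X j * r := mul_nonneg hs0 hr0
    have hsl : 0 ≤ specPsi X j * (q * Real.log M) := mul_nonneg hs0 hlog
    have hT' : T = trPsi X j + 4 * (specPsi X j * (q * Real.log M)) + 2 * (specPsi X j * r) := by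
      rw [hT]; ring
    have hT0 : 0 ≤ T := by rw [hT']; linarith
    have hsq : 4 * σ ^ 2 * T ≤ N * lam j ^ 2 := by
      have h := pow_le_pow_left₀ (by positivity) (hlam j) 2
      rw [mul_pow, div_pow, Real.sq_sqrt hN'.le, Real.sq_sqrt hT0, div_mul_eq_mul_div,
        div_le_iff₀ hN'] at h
      linarith
    calc _ = N * (σ ^ 2 * (2 * trPsi X j + 4 * (specPsi X j * (q * Real.log M)))) := by ring
      _ ≤ N * (4 * σ ^ 2 * T) := by
          refine mul_le_mul_of_nonneg_left ?_ hN'.le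
          rw [mul_comm 4 (σ ^ 2), mul_assoc]
          exact mul_le_mul_of_nonneg_left (by rw [hT']; linarith) (sq_nonneg σ)
      _ ≤ N * (N * lam j ^ 2) := mul_le_mul_of_nonneg_left hsq hN'.le
      _ = _ := by ring
  have hbad : μ.real (W ⁻¹' ⋃ j, B j) ≤ (M : ℝ) ^ ((1 : ℝ) - q) := by
    rw [← map_measureReal_apply_of_aemeasurable hWm (MeasurableSet.iUnion hBm), hW]
    calc _ ≤ ∑ j, _ := measureReal_iUnion_fintype_le _
      _ ≤ ∑ _j : Fin M, (M : ℝ) ^ (-q) := Finset.sum_le_sum fun j _ => hBp j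
      _ = _ := by
          rw [sub_eq_add_neg, Real.rpow_add hM', Real.rpow_one]
          simp
  -- `W` is only a.e. measurable, hence the measurable hull of the bad event
  refine ⟨(toMeasurable μ (W ⁻¹' ⋃ j, B j))ᶜ, (measurableSet_toMeasurable _ _).compl, ?_, ?_⟩
  · change _ ≤ μ.real _
    rw [probReal_compl_eq_one_sub (measurableSet_toMeasurable _ _), measureReal_def,
      measure_toMeasurable, ← measureReal_def]
    have : 0 ≤ (M : ℝ) ^ ((1 : ℝ) - q) := by positivity
    linarith
  · intro ω hω b hb
    refine slow_rate_of_noise hN X βstar (W ω) lam hlam_pos (fun j => ?_) b hb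
    by_contra h
    exact hω (subset_toMeasurable _ _ (Set.mem_iUnion.2 ⟨j, not_le.1 h⟩))

end GroupLasso
end
end
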